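/- (Quasi-Rolle's Theorem) Let f : ℝ → ℝ be continuous on [a, b] (a < b), specularly differentiable at every point of (a, b), with f(a) = f(b) = 0. Then there exist c₁, c₂ ∈ (a, b) such that f^S(c₂) ≤ 0 ≤ f^S(c₁). -/

import Mathlib

open Filter Topology Set

/-- The combination function `A(α,β)` from the paper: the slope of the specular
tangent determined by one-sided slopes `α` (right) and `β` (left). -/
noncomputable def specA (α β : ℝ) : ℝ :=
  if α + β = 0 then 0
  else (α * β - 1 + Real.sqrt ((α ^ 2 + 1) * (β ^ 2 + 1))) / (α + β)

/-- `HasSpecData f x₀ L α β` means: the left and right limits of `f` at `x₀` both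
exist and are equal to `L`, the right specular derivative of `f` at `x₀` is `α`,
and the left specular derivative of `f` at `x₀` is `β`. -/
def HasSpecData (f : ℝ → ℝ) (x₀ L α β : ℝ) : Prop :=
  Tendsto f (𝓝[<] x₀) (𝓝 L) ∧ Tendsto f (𝓝[>] x₀) (𝓝 L) ∧
    Tendsto (fun x => (f x - L) / (x - x₀)) (𝓝[>] x₀) (𝓝 α) ∧
    Tendsto (fun x => (f x - L) / (x - x₀)) (𝓝[<] x₀) (𝓝 β)

/-- `f` is specularly differentiable at `x₀`. -/
def SpecDifferentiableAt (f : ℝ → ℝ) (x₀ : ℝ) : Prop :=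
  ∃ L α β, HasSpecData f x₀ L α β

/-- `f` is specularly differentiable at `x₀` with specular derivative `d`. -/
def HasSpecDerivAt (f : ℝ → ℝ) (x₀ d : ℝ) : Prop :=
  ∃ L α β, HasSpecData f x₀ L α β ∧ d = specA α β


lemma specA_nonneg {α β : ℝ} (h : 0 ≤ α + β) : 0 ≤ specA α β := by
  unfold specA
  split_ifs with h0
  · exact le_rfl
  · apply div_nonneg _ h
    have : |α * β - 1| ≤ Real.sqrt ((α ^ 2 + 1) * (β ^ 2 + 1)) := by
      apply Real.abs_le_sqrt
      nlinarith [sq_nonneg (α + β)]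
    linarith [neg_abs_le (α * β - 1)]

lemma specA_neg (α β : ℝ) : specA (-α) (-β) = - specA α β := by
  unfold specA
  by_cases h : α + β = 0
  · rw [if_pos h, if_pos (by linarith)]; simp
  · rw [if_neg h, if_neg (fun h' => h (by linarith))]
    rw [show -α + -β = -(α + β) by ring, div_neg]
    congr 2
    ring_nf

lemma specA_nonpos {α β : ℝ} (h : α + β ≤ 0) : specA α β ≤ 0 := by
  have := specA_nonneg (α := -α) (β := -β) (by linarith)
  rw [specA_neg] at this
  linarith

lemma HasSpecData.neg {f : ℝ → ℝ} {x L α β : ℝ} (h : HasSpecData f x L α β) :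
    HasSpecData (fun t => - f t) x (-L) (-α) (-β) := by
  obtain ⟨h1, h2, h3, h4⟩ := h
  refine ⟨h1.neg, h2.neg, h3.neg.congr fun t => ?_, h4.neg.congr fun t => ?_⟩ <;>
  · rw [← neg_div]; ring_nf

lemma spec_up (f : ℝ → ℝ) (p q : ℝ) (hpq : p < q)
    (hcont : ContinuousOn f (Set.Icc p q))
    (hspec : ∀ x ∈ Set.Ioo p q, SpecDifferentiableAt f x)
    (hlt : f p < f q) :
    ∃ c ∈ Set.Ioo p q, ∃ L α β, HasSpecData f c L α β ∧ 0 ≤ α + β := by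
  obtain ⟨k, hk1, hk2⟩ := exists_between hlt
  set S : Set ℝ := {x | x ∈ Set.Icc p q ∧ k < f x} with hS
  have hqS : q ∈ S := ⟨⟨hpq.le, le_rfl⟩, hk2⟩
  have hbdd : BddBelow S := ⟨p, fun x hx => hx.1.1⟩
  set c := sInf S with hc
  have hpc : p ≤ c := le_csInf ⟨q, hqS⟩ fun x hx => hx.1.1
  have hcq : c ≤ q := csInf_le hbdd hqS
  have hcc : ContinuousWithinAt f (Set.Icc p q) c := hcont c ⟨hpc, hcq⟩
  have hleft : ∀ x, p ≤ x → x < c → f x ≤ k := by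
    intro x hx hxc
    by_contra hh
    push Not at hh
    exact absurd (csInf_le hbdd (show x ∈ S from ⟨⟨hx, hxc.le.trans hcq⟩, hh⟩)) (not_le.2 hxc)
  have hge : k ≤ f c := by
    have hcl : c ∈ closure S := csInf_mem_closure ⟨q, hqS⟩ hbdd
    have hne : (𝓝[S] c).NeBot := mem_closure_iff_nhdsWithin_neBot.1 hcl
    have ht : Tendsto f (𝓝[S] c) (𝓝 (f c)) :=
      (hcc.mono (fun x hx => hx.1 : S ⊆ Set.Icc p q))
    exact ge_of_tendsto ht (eventually_nhdsWithin_of_forall fun x hx => hx.2.le)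
  have hpc' : p < c := by
    rcases hpc.lt_or_eq with h | h
    · exact h
    · rw [← h] at hge; linarith
  have hlim : Tendsto f (𝓝[<] c) (𝓝 (f c)) := by
    have : 𝓝[<] c = 𝓝[Set.Ioo p c] c := (nhdsWithin_Ioo_eq_nhdsLT hpc').symm
    rw [this]
    exact hcc.mono fun x hx => ⟨hx.1.le, hx.2.le.trans hcq⟩
  have hEl : ∀ᶠ x in 𝓝[<] c, f x ≤ k ∧ x < c := by
    filter_upwards [Ioo_mem_nhdsLT hpc'] with x hx
    exact ⟨hleft x hx.1.le hx.2, hx.2⟩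
  have hle : f c ≤ k := le_of_tendsto hlim (hEl.mono fun x hx => hx.1)
  have hfc : f c = k := le_antisymm hle hge
  have hcq' : c < q := by
    rcases hcq.lt_or_eq with h | h
    · exact h
    · rw [h] at hfc; linarith
  obtain ⟨L, α, β, hd⟩ := hspec c ⟨hpc', hcq'⟩
  have hL : L = k := by
    rw [← hfc]; exact tendsto_nhds_unique hd.1 hlim
  refine ⟨c, ⟨hpc', hcq'⟩, L, α, β, hd, ?_⟩
  obtain ⟨-, -, h3, h4⟩ := hd
  have hβ : 0 ≤ β := by
    refine ge_of_tendsto h4 (hEl.mono fun x hx => ?_)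
    exact div_nonneg_of_nonpos (by linarith [hx.1]) (by linarith [hx.2])
  have hα : 0 ≤ α := by
    by_contra hneg
    push Not at hneg
    have hev := h3.eventually (gt_mem_nhds hneg)
    obtain ⟨u, hu, hsub⟩ := (mem_nhdsGT_iff_exists_Ioo_subset).1 hev
    obtain ⟨x, hxS, hxu⟩ := exists_lt_of_csInf_lt ⟨q, hqS⟩ (show sInf S < u from hu)
    have hcx : c < x := by
      rcases (csInf_le hbdd hxS : c ≤ x).lt_or_eq with h | h
      · exact h
      · have := hxS.2
        rw [← h, hfc] at this
        exact absurd this (lt_irrefl _)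
    have h5 : (f x - L) / (x - c) < 0 := hsub ⟨hcx, hxu⟩
    have h6 : 0 ≤ (f x - L) / (x - c) :=
      div_nonneg (by linarith [hxS.2]) (by linarith)
    linarith
  linarith

lemma spec_down (f : ℝ → ℝ) (p q : ℝ) (hpq : p < q)
    (hcont : ContinuousOn f (Set.Icc p q))
    (hspec : ∀ x ∈ Set.Ioo p q, SpecDifferentiableAt f x)
    (hlt : f q < f p) :
    ∃ c ∈ Set.Ioo p q, ∃ L α β, HasSpecData f c L α β ∧ α + β ≤ 0 := by
  obtain ⟨c, hc, L, α, β, hd, h⟩ := spec_up (fun t => - f t) p q hpq hcont.neg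
    (fun x hx => by
      obtain ⟨L, α, β, hd⟩ := hspec x hx
      exact ⟨_, _, _, hd.neg⟩) (by simpa using hlt)
  refine ⟨c, hc, -L, -α, -β, by simpa using hd.neg, by linarith⟩

theorem quasi_rolle (f : ℝ → ℝ) (a b : ℝ) (hab : a < b)
    (hcont : ContinuousOn f (Set.Icc a b))
    (hspec : ∀ x ∈ Set.Ioo a b, SpecDifferentiableAt f x)
    (ha : f a = 0) (hb : f b = 0) :
    ∃ c₁ ∈ Set.Ioo a b, ∃ c₂ ∈ Set.Ioo a b, ∃ d₁ d₂,
      HasSpecDerivAt f c₁ d₁ ∧ HasSpecDerivAt f c₂ d₂ ∧ d₂ ≤ 0 ∧ 0 ≤ d₁ := by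
  suffices H : (∃ c ∈ Set.Ioo a b, ∃ L α β, HasSpecData f c L α β ∧ 0 ≤ α + β) ∧
      (∃ c ∈ Set.Ioo a b, ∃ L α β, HasSpecData f c L α β ∧ α + β ≤ 0) by
    obtain ⟨⟨c₁, hc₁, L₁, α₁, β₁, hd₁, h₁⟩, ⟨c₂, hc₂, L₂, α₂, β₂, hd₂, h₂⟩⟩ := H
    exact ⟨c₁, hc₁, c₂, hc₂, _, _, ⟨_, _, _, hd₁, rfl⟩, ⟨_, _, _, hd₂, rfl⟩,
      specA_nonpos h₂, specA_nonneg h₁⟩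
  by_cases hz : ∀ x ∈ Set.Ioo a b, f x = 0
  · obtain ⟨m, hm⟩ := exists_between hab
    obtain ⟨L, α, β, hd⟩ := hspec m hm
    have hev : ∀ᶠ x in 𝓝 m, f x = 0 := by
      filter_upwards [Ioo_mem_nhds hm.1 hm.2] with x hx using hz x hx
    have hl : ∀ᶠ x in 𝓝[<] m, f x = 0 := hev.filter_mono nhdsWithin_le_nhds
    have hr : ∀ᶠ x in 𝓝[>] m, f x = 0 := hev.filter_mono nhdsWithin_le_nhds
    have hL : L = 0 := tendsto_nhds_unique hd.1
      (tendsto_const_nhds.congr' (hl.mono fun x hx => hx.symm))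
    have hα : α = 0 := tendsto_nhds_unique hd.2.2.1
      (tendsto_const_nhds.congr' (hr.mono fun x hx => by simp [hx, hL]))
    have hβ : β = 0 := tendsto_nhds_unique hd.2.2.2
      (tendsto_const_nhds.congr' (hl.mono fun x hx => by simp [hx, hL]))
    have hs : α + β = 0 := by rw [hα, hβ, add_zero]
    exact ⟨⟨m, hm, L, α, β, hd, hs.ge⟩, ⟨m, hm, L, α, β, hd, hs.le⟩⟩
  · push Not at hz
    obtain ⟨m, hm, hne⟩ := hz
    have c1 : ContinuousOn f (Set.Icc a m) := hcont.mono (Set.Icc_subset_Icc_right hm.2.le)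
    have c2 : ContinuousOn f (Set.Icc m b) := hcont.mono (Set.Icc_subset_Icc_left hm.1.le)
    have i1 : Set.Ioo a m ⊆ Set.Ioo a b := Set.Ioo_subset_Ioo_right hm.2.le
    have i2 : Set.Ioo m b ⊆ Set.Ioo a b := Set.Ioo_subset_Ioo_left hm.1.le
    rcases lt_or_gt_of_ne hne with h | h
    · obtain ⟨c, hc, hh⟩ := spec_up f m b hm.2 c2 (fun x hx => hspec x (i2 hx)) (by rwa [hb])
      obtain ⟨c', hc', hh'⟩ := spec_down f a m hm.1 c1 (fun x hx => hspec x (i1 hx)) (by rwa [ha])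
      exact ⟨⟨c, i2 hc, hh⟩, ⟨c', i1 hc', hh'⟩⟩
    · obtain ⟨c, hc, hh⟩ := spec_up f a m hm.1 c1 (fun x hx => hspec x (i1 hx)) (by rwa [ha])
      obtain ⟨c', hc', hh'⟩ := spec_down f m b hm.2 c2 (fun x hx => hspec x (i2 hx)) (by rwa [hb])
      exact ⟨⟨c, i1 hc, hh⟩, ⟨c', i2 hc', hh'⟩⟩
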